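/- arXiv:1808.10316 — 3 statements merged into one kernel-verified Lean document; each statement's English description precedes it below -/
import Mathlib

section
/- Let G be a finite simple graph on n vertices with arboricity at most α, where α ≥ 1 is a natural number. Then G contains a maximal independent set M with 2α · |M| ≥ n (i.e., |M| ≥ n/(2α)). -/
/-!
Summing degrees over any nonempty set `U` of vertices gives at most `2α(|U| - 1) < 2α|U|`, so some
vertex of `U` has fewer than `2α` neighbours in `U`. Hence `G` can be coloured greedily with `2α`
colours, its largest colour class has at least `n / (2α)` vertices, and so does any independent set
of maximum size, which is in particular maximal.
-/

section

open Finset SimpleGraph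

variable {V : Type*} {G : SimpleGraph V}

section Degenerate

variable [DecidableRel G.Adj] {d : ℕ}

/-- `d`-degeneracy of a graph: every nonempty finite set of vertices induces a subgraph with a
vertex of degree at most `d`. It is what makes greedy colouring with `d + 1` colours possible. -/
def IsDegenerate (G : SimpleGraph V) [DecidableRel G.Adj] (d : ℕ) : Prop :=
  ∀ U : Finset V, U.Nonempty → ∃ v ∈ U, #{w ∈ U | G.Adj v w} ≤ d

theorem IsDegenerate.exists_coloring_on (hG : IsDegenerate G d) (U : Finset V) :
    ∃ c : V → Fin (d + 1), ∀ u ∈ U, ∀ v ∈ U, G.Adj u v → c u ≠ c v := by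
  classical
  induction U using Finset.strongInduction with
  | H U ih =>
    rcases U.eq_empty_or_nonempty with rfl | hU
    · exact ⟨0, by simp⟩
    obtain ⟨x, hxU, hdeg⟩ := hG U hU
    obtain ⟨c, hc⟩ := ih (U.erase x) (erase_ssubset hxU)
    obtain ⟨a, ha⟩ : ∃ a, a ∉ image c {w ∈ U | G.Adj x w} := by
      have hlt : #(image c {w ∈ U | G.Adj x w}) < #(univ : Finset (Fin (d + 1))) :=
        (card_image_le.trans hdeg).trans_lt (by simp)
      simpa using exists_mem_notMem_of_card_lt_card hlt
    have hfresh (w) (hw : w ∈ U) (hxw : G.Adj x w) : c w ≠ a := fun h ↦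
      ha (mem_image.2 ⟨w, mem_filter.2 ⟨hw, hxw⟩, h⟩)
    refine ⟨Function.update c x a, fun u hu v hv huv ↦ ?_⟩
    rcases eq_or_ne u x with rfl | hux
    · simpa [huv.ne'] using (hfresh v hv huv).symm
    rcases eq_or_ne v x with rfl | hvx
    · simpa [hux] using hfresh u hu huv.symm
    simpa [hux, hvx] using hc u (mem_erase.2 ⟨hux, hu⟩) v (mem_erase.2 ⟨hvx, hv⟩) huv

theorem IsDegenerate.colorable [Finite V] (hG : IsDegenerate G d) : G.Colorable (d + 1) := by
  cases nonempty_fintype V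
  obtain ⟨c, hc⟩ := hG.exists_coloring_on univ
  exact ⟨Coloring.mk c (hc _ (mem_univ _) _ (mem_univ _))⟩

end Degenerate

theorem degree_induce_coe_finset [DecidableRel G.Adj] {U : Finset V} (v : (U : Set V)) :
    (G.induce (U : Set V)).degree v = #{w ∈ U | G.Adj v w} := by
  rw [← card_neighborFinset_eq_degree, ← card_map (.subtype (· ∈ (U : Set V)))]
  congr 1
  ext w
  simp [and_comm]

theorem exists_degree_lt_of_two_mul_card_edgeFinset_lt [Fintype V] [DecidableRel G.Adj] {d : ℕ}
    (h : 2 * #G.edgeFinset < d * Fintype.card V) : ∃ v, G.degree v < d := by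
  have hsum : ∑ v, G.degree v < ∑ _v : V, d := by
    rw [G.sum_degrees_eq_twice_card_edges]
    simpa [mul_comm d] using h
  simpa using exists_lt_of_sum_lt hsum

section Arboricity

variable [Fintype V] [DecidableEq V] [DecidableRel G.Adj] {α : ℕ}

/-- The Nash-Williams density condition expressing that `G` has arboricity at most `α`. For
`2 ≤ #U` the subtraction does not truncate. -/
def ArboricityLE (G : SimpleGraph V) [DecidableRel G.Adj] (α : ℕ) : Prop :=
  ∀ U : Finset V, 2 ≤ #U → #{e ∈ G.edgeFinset | ∀ v ∈ e, v ∈ U} ≤ α * (#U - 1)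

theorem ArboricityLE.card_edgeFinset_induce_lt (hG : ArboricityLE G α) (hα : 1 ≤ α)
    {U : Finset V} (hU : U.Nonempty) : #(G.induce (U : Set V)).edgeFinset < α * #U := by
  rcases (one_le_card.2 hU).eq_or_lt with hone | htwo
  · calc #(G.induce (U : Set V)).edgeFinset
      _ ≤ (#U).choose 2 := by simpa using (G.induce (U : Set V)).card_edgeFinset_le_card_choose_two
      _ < α * #U := by simpa [← hone] using Nat.succ_le_iff.1 hα
  · calc #(G.induce (U : Set V)).edgeFinset
        = #{e ∈ G.edgeFinset | ∀ v ∈ e, v ∈ U} := by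
          rw [← card_filter_edgeFinset_toFinset_subset]
          simp [subset_iff]
      _ ≤ α * (#U - 1) := hG U htwo
      _ < α * #U := Nat.mul_lt_mul_of_pos_left (Nat.sub_one_lt_of_lt htwo) hα

theorem ArboricityLE.isDegenerate (hG : ArboricityLE G α) (hα : 1 ≤ α) :
    IsDegenerate G (2 * α - 1) := by
  intro U hU
  obtain ⟨v, hv⟩ : ∃ v, (G.induce (U : Set V)).degree v < 2 * α := by
    apply exists_degree_lt_of_two_mul_card_edgeFinset_lt
    have := hG.card_edgeFinset_induce_lt hα hU
    simp [mul_assoc, this]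
  rw [degree_induce_coe_finset] at hv
  exact ⟨v, v.2, Nat.le_sub_one_of_lt hv⟩

theorem ArboricityLE.colorable (hG : ArboricityLE G α) (hα : 1 ≤ α) : G.Colorable (2 * α) := by
  simpa [Nat.sub_add_cancel (show 1 ≤ 2 * α by omega)] using (hG.isDegenerate hα).colorable

end Arboricity

theorem card_le_mul_indepNum_of_colorable [Fintype V] {k : ℕ} (hG : G.Colorable k) :
    Fintype.card V ≤ k * G.indepNum := by
  classical
  obtain ⟨C⟩ := hG
  have hclass (a : Fin k) : #{v | C v = a} ≤ G.indepNum := by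
    apply IsIndepSet.card_le_indepNum
    simpa [Coloring.colorClass] using C.isIndepSet_colorClass a
  calc Fintype.card V = ∑ a, #{v | C v = a} :=
        card_eq_sum_card_fiberwise fun v _ ↦ mem_coe.2 (mem_univ (C v))
    _ ≤ ∑ _a : Fin k, G.indepNum := sum_le_sum fun a _ ↦ hclass a
    _ = k * G.indepNum := by simp

theorem exists_adj_of_maximal_isIndepSet {s : Set V} (hs : Maximal G.IsIndepSet s) {v : V}
    (hv : v ∉ s) : ∃ u ∈ s, G.Adj v u := by
  by_contra! hnadj
  have hins : G.IsIndepSet (insert v s) :=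
    hs.prop.insert fun u hu _ ↦ ⟨hnadj u hu, fun huv ↦ hnadj u hu huv.symm⟩
  exact hv (hs.le_of_ge hins (Set.subset_insert v s) (Set.mem_insert v s))

end

/-- A finite simple graph on `n` vertices with arboricity at most
`α ≥ 1` contains a maximal independent set `M` with `2α · |M| ≥ n`. -/
theorem stmt1 {V : Type*} [Fintype V] [DecidableEq V]
    (G : SimpleGraph V) [DecidableRel G.Adj] (α : ℕ) (hα : 1 ≤ α)
    (harb : ∀ U : Finset V, 2 ≤ U.card →
      (G.edgeFinset.filter (fun e => ∀ v ∈ e, v ∈ U)).card ≤ α * (U.card - 1)) :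
    ∃ M : Finset V,
      (∀ u ∈ M, ∀ v ∈ M, ¬ G.Adj u v) ∧
      (∀ v, v ∉ M → ∃ u ∈ M, G.Adj v u) ∧
      Fintype.card V ≤ 2 * α * M.card := by
  have hcol : G.Colorable (2 * α) := ArboricityLE.colorable harb hα
  obtain ⟨M, hM⟩ := G.maximumIndepSet_exists
  have hmax : Maximal G.IsIndepSet (M : Set V) := hM.isMaximalIndepSet
  refine ⟨M, fun u hu v hv huv ↦ hM.isIndepSet hu hv huv.ne huv,
    fun v hv ↦ exists_adj_of_maximal_isIndepSet hmax hv, ?_⟩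
  rw [G.maximumIndepSet_card_eq_indepNum M hM]
  exact card_le_mul_indepNum_of_colorable hcol
end

section
/- Let G be a finite simple graph with m ≥ 1 edges. Then the arboricity of G is at most ⌈√m⌉; that is, for every subset U of the vertices of G with |U| ≥ 2, the number of edges of G with both endpoints in U is at most ⌈√m⌉ · (|U| − 1). -/
/-!
A set of `n + 1` vertices spans at most `(n + 1) n / 2` edges, which is at most `c n` as long as
`n + 1 ≤ 2 c`. Otherwise `2 c ≤ n`, and a graph with at most `2 c²` edges has at most `c n` edges
altogether. So the arboricity is at most `⌈√(m / 2)⌉`.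
-/

theorem card_edgeFinset_inter_sym2_le_choose_two {V : Type*} [DecidableEq V] (G : SimpleGraph V)
    [Fintype G.edgeSet] (U : Finset V) :
    (G.edgeFinset ∩ U.sym2).card ≤ U.card.choose 2 := by
  have subset_offDiag : G.edgeFinset ∩ U.sym2 ⊆ U.offDiag.image Sym2.mk.uncurry := by
    intro e he
    induction e with
    | _ v w =>
      obtain ⟨adj, hv, hw⟩ : G.Adj v w ∧ v ∈ U ∧ w ∈ U := by simpa using he
      exact Finset.mem_image.2 ⟨(v, w), Finset.mem_offDiag.2 ⟨hv, hw, adj.ne⟩, rfl⟩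
  exact (Finset.card_le_card subset_offDiag).trans_eq (Sym2.card_image_offDiag U)

theorem min_choose_two_le_mul {m c : ℕ} (hm : m ≤ 2 * c ^ 2) (n : ℕ) :
    min m ((n + 1).choose 2) ≤ c * n := by
  obtain n_small | n_large : n + 1 ≤ 2 * c ∨ 2 * c ≤ n := by lia
  · refine min_le_of_right_le ?_
    calc (n + 1).choose 2 = (n + 1) * n / 2 := Nat.choose_two_right (n + 1)
      _ ≤ 2 * c * n / 2 := by gcongr
      _ = c * n := by rw [mul_assoc, Nat.mul_div_cancel_left _ two_pos]
  · refine min_le_of_left_le ?_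
    calc m ≤ 2 * c ^ 2 := hm
      _ = c * (2 * c) := by ring
      _ ≤ c * n := by gcongr

theorem stmt3_general {V : Type*} [DecidableEq V] (G : SimpleGraph V) [Fintype G.edgeSet] {c : ℕ}
    (hc : G.edgeFinset.card ≤ 2 * c ^ 2) {U : Finset V} (hU : U.Nonempty) :
    (G.edgeFinset ∩ U.sym2).card ≤ c * (U.card - 1) := by
  obtain ⟨n, card_eq⟩ : ∃ n, U.card = n + 1 := Nat.exists_eq_add_one.2 hU.card_pos
  have le_choose := card_edgeFinset_inter_sym2_le_choose_two G U
  rw [card_eq] at le_choose ⊢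
  calc (G.edgeFinset ∩ U.sym2).card
      ≤ min G.edgeFinset.card ((n + 1).choose 2) :=
        le_min (Finset.card_le_card Finset.inter_subset_left) le_choose
    _ ≤ c * n := min_choose_two_le_mul hc n

/-- A finite simple graph with `m ≥ 1` edges has arboricity at
most `⌈√m⌉`, where `⌈√m⌉` is the least natural number `c` with `c² ≥ m`:
every vertex subset `U` with `|U| ≥ 2` spans at most `⌈√m⌉ · (|U| − 1)`
edges. -/
theorem stmt3 {V : Type*} [Fintype V] [DecidableEq V]
    (G : SimpleGraph V) [DecidableRel G.Adj] (m : ℕ)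
    (hm : m = G.edgeFinset.card) (hm1 : 1 ≤ m)
    (c : ℕ) (hc : IsLeast {k : ℕ | m ≤ k ^ 2} c) :
    ∀ U : Finset V, 2 ≤ U.card →
      (G.edgeFinset.filter (fun e => ∀ v ∈ e, v ∈ U)).card ≤ c * (U.card - 1) := by
  intro U hU
  have edges_le : G.edgeFinset.card ≤ 2 * c ^ 2 :=
    hm ▸ hc.1.out.trans (Nat.le_mul_of_pos_left _ two_pos)
  simpa only [← Finset.mem_sym2_iff, Finset.filter_mem_eq_inter] using
    stmt3_general G edges_le (Finset.card_pos.1 (two_pos.trans_le hU))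
end

section
/- Let α ≥ 1 and n ≥ 1 be natural numbers and set s = 8α. Let (p_j) and (u_j), for j = 1, 2, …, b, be sequences of natural numbers satisfying: (i) p_1 ≥ 1; (ii) for every j ≤ b, p_j · s < 4α(p_j + u_j); and (iii) for every j < b, p_{j+1} ≥ p_j + u_j. Then for every j ≤ b one has p_j < u_j and p_j ≥ 2^{j−1}. Consequently, if moreover p_j ≤ n for every j ≤ b, then b ≤ log₂ n + 1 (equivalently, 2^{b−1} ≤ n). -/
/-!
With `c = 4α`, the bound `p j * (2 * c) < c * (p j + u j)` says that `p j` is less than half of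
`p j + u j`, so `p j < u j`. Hence `p (j + 1) ≥ p j + u j ≥ 2 * p j`: the number of processed
vertices at least doubles in every epoch, and `n` vertices leave room for only `log₂ n + 1` epochs.
-/

theorem lt_of_mul_two_mul_lt_mul_add {R : Type*} [CommSemiring R] [LinearOrder R]
    [IsOrderedRing R] {a b c : R} (hc : 0 ≤ c) (h : a * (2 * c) < c * (a + b)) : a < b :=
  lt_of_not_ge fun hba => h.not_ge <|
    calc c * (a + b) ≤ c * (a + a) := by gcongr
      _ = a * (2 * c) := by ring

theorem pow_sub_mul_le_of_mul_le_succ {R : Type*} [MonoidWithZero R] [Preorder R] [PosMulMono R]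
    {f : ℕ → R} {r : R} {m b : ℕ} (hr : 0 ≤ r)
    (hstep : ∀ j, m ≤ j → j < b → r * f j ≤ f (j + 1)) {j : ℕ} (hmj : m ≤ j) (hjb : j ≤ b) :
    r ^ (j - m) * f m ≤ f j := by
  induction j, hmj using Nat.le_induction with
  | base => simp
  | succ k hmk ih =>
    calc r ^ (k + 1 - m) * f m = r * (r ^ (k - m) * f m) := by
          rw [Nat.sub_add_comm hmk, pow_succ', mul_assoc]
      _ ≤ r * f k := mul_le_mul_of_nonneg_left (ih (Nat.le_of_succ_le hjb)) hr
      _ ≤ f (k + 1) := hstep k hmk hjb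

theorem stmt4_general {R : Type*} [CommSemiring R] [LinearOrder R] [IsOrderedRing R]
    {c n : R} {b : ℕ} (hc : 0 ≤ c) (hn : 1 ≤ n) {p u : ℕ → R} (hp1 : 1 ≤ p 1)
    (hterm : ∀ j, 1 ≤ j → j ≤ b → p j * (2 * c) < c * (p j + u j))
    (hstep : ∀ j, 1 ≤ j → j < b → p j + u j ≤ p (j + 1)) :
    (∀ j, 1 ≤ j → j ≤ b → p j < u j ∧ 2 ^ (j - 1) ≤ p j) ∧
    ((∀ j, 1 ≤ j → j ≤ b → p j ≤ n) → 2 ^ (b - 1) ≤ n) := by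
  have processed_lt : ∀ j, 1 ≤ j → j ≤ b → p j < u j := fun j hj hjb =>
    lt_of_mul_two_mul_lt_mul_add hc (hterm j hj hjb)
  have doubling : ∀ j, 1 ≤ j → j < b → 2 * p j ≤ p (j + 1) := fun j hj hjb =>
    calc 2 * p j = p j + p j := two_mul _
      _ ≤ p j + u j := add_le_add_right (processed_lt j hj hjb.le).le _
      _ ≤ p (j + 1) := hstep j hj hjb
  have pow_le : ∀ j, 1 ≤ j → j ≤ b → 2 ^ (j - 1) ≤ p j := fun j hj hjb =>
    calc (2 : R) ^ (j - 1) ≤ 2 ^ (j - 1) * p 1 :=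
          le_mul_of_one_le_right (pow_nonneg zero_le_two _) hp1
      _ ≤ p j := pow_sub_mul_le_of_mul_le_succ zero_le_two doubling hj hjb
  refine ⟨fun j hj hjb => ⟨processed_lt j hj hjb, pow_le j hj hjb⟩, fun hpn => ?_⟩
  obtain rfl | hb := b.eq_zero_or_pos
  · simpa using hn
  · exact (pow_le b hb le_rfl).trans (hpn b hb le_rfl)

/-- With `s = 8α`, `α ≥ 1`, `n ≥ 1`, if the sequences `p, u` of
naturals satisfy `p 1 ≥ 1`, `p j · s < 4α(p j + u j)` for `1 ≤ j ≤ b`, and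
`p (j+1) ≥ p j + u j` for `1 ≤ j < b`, then for all `1 ≤ j ≤ b` we have
`p j < u j` and `p j ≥ 2^(j−1)`; consequently, if `p j ≤ n` for all
`1 ≤ j ≤ b`, then `2^(b−1) ≤ n`. -/
theorem stmt4 (α n b : ℕ) (hα : 1 ≤ α) (hn : 1 ≤ n)
    (s : ℕ) (hs : s = 8 * α)
    (p u : ℕ → ℕ)
    (hp1 : 1 ≤ p 1)
    (hterm : ∀ j, 1 ≤ j → j ≤ b → p j * s < 4 * α * (p j + u j))
    (hstep : ∀ j, 1 ≤ j → j < b → p j + u j ≤ p (j + 1)) :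
    (∀ j, 1 ≤ j → j ≤ b → p j < u j ∧ 2 ^ (j - 1) ≤ p j) ∧
    ((∀ j, 1 ≤ j → j ≤ b → p j ≤ n) → 2 ^ (b - 1) ≤ n) := by
  have hs' : s = 2 * (4 * α) := by lia
  exact stmt4_general (Nat.zero_le _) hn hp1 (hs' ▸ hterm) hstep
end
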